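/- The transaction system preserves invariants: for every Y ⊆ X, every reachable state of the CTS lies in Y if and only if for every state (q,h) reachable in the transaction system CTS' (from initial state (q0,h0)), q ∈ Y. -/

import Mathlib

/-!
The transaction system only decorates states with phases: its steps project to steps of the
original system, and conversely every step can be decorated, since the phase of the moving process
may always be chosen as `R` (when the rule for `R` applies) or `N` (when it does not). So both
systems reach the same underlying states, and hence have the same invariants.
-/

namespace TRF

/-- Phases of a transaction: external (N), pre-phase (R), post-phase (L). -/
inductive Phase : Type
  | N | R | L
deriving DecidableEq

/-- A concurrent transition system (CTS) over states `X`, actions `A` and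
processes `P`.  The partition `A = ⨄ A_i` is given by the map `proc`
assigning to each action the (unique) process it belongs to. -/
structure CTS (X A P : Type) where
  T : X → A → X → Prop
  proc : A → P
  q0 : X

variable {X A P : Type}

/-- Sequential composition of binary relations. -/
def RComp {S : Type _} (r s : S → S → Prop) : S → S → Prop :=
  fun x z => ∃ y, r x y ∧ s y z

namespace CTS

/-- The relation `→α`. -/
def rel (S : CTS X A P) (α : A) : X → X → Prop := fun q q' => S.T q α q'

/-- The relation `→_i` (union of `→α` over `α ∈ A_i`). -/
def stepOf (S : CTS X A P) (i : P) : X → X → Prop :=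
  fun q q' => ∃ α, S.proc α = i ∧ S.T q α q'

/-- The relation `→` (union of all `→α`). -/
def step (S : CTS X A P) : X → X → Prop := fun q q' => ∃ α, S.T q α q'

/-- The enabled actions at `q`. -/
def en (S : CTS X A P) (q : X) : Set A := {α | ∃ q', S.T q α q'}

/-- Reachability from the initial state. -/
def Reach (S : CTS X A P) (q : X) : Prop := Relation.ReflTransGen S.step S.q0 q

/-- `α` right-commutes with `β`:  `→α ∘ →β ⊆ →β ∘ →α`. -/
def RightComm (S : CTS X A P) (α β : A) : Prop :=
  ∀ x z, RComp (S.rel α) (S.rel β) x z → RComp (S.rel β) (S.rel α) x z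

/-- `α` left-commutes with `β`:  `→α ∘ →β ⊇ →β ∘ →α`. -/
def LeftComm (S : CTS X A P) (α β : A) : Prop :=
  ∀ x z, RComp (S.rel β) (S.rel α) x z → RComp (S.rel α) (S.rel β) x z

/-- `α` and `β` strongly commute:  `c ◁ (→α ∘ →β) = c ◁ (→β ∘ →α)` where
`c` is the set of states where both are enabled. -/
def StrongComm (S : CTS X A P) (α β : A) : Prop :=
  ∀ x z, α ∈ S.en x → β ∈ S.en x →
    (RComp (S.rel α) (S.rel β) x z ↔ RComp (S.rel β) (S.rel α) x z)

/-- Finite paths, labelled by a list of actions. -/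
def Path (S : CTS X A P) : X → List A → X → Prop
  | q, [], q'' => q = q''
  | q, a :: as, q'' => ∃ q', S.T q a q' ∧ S.Path q' as q''

/-- `E` is a necessary enabling set (NES) for `α` at `q1`. -/
def IsNES (S : CTS X A P) (α : A) (q1 : X) (E : Set A) : Prop :=
  ∀ (as : List A) (qn : X), S.Path q1 as qn → α ∉ S.en q1 → α ∈ S.en qn →
    ∃ β ∈ E, β ∈ as

end CTS

/-- The three commutativity modes ←, →, ↔. -/
inductive StarMode : Type
  | left | right | strong

/-- ⋆-commutativity. -/
def CTS.StarComm (S : CTS X A P) : StarMode → A → A → Prop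
  | .left => S.LeftComm
  | .right => S.RightComm
  | .strong => S.StrongComm

/-- `B` is semi-⋆-stubborn at `q` (conditions D1 and D2). -/
def CTS.SemiStubborn (S : CTS X A P) (st : StarMode) (q : X) (B : Set A) : Prop :=
  (∀ α ∈ B, α ∉ S.en q → ∃ E, S.IsNES α q E ∧ E ⊆ B) ∧
  (∀ α ∈ B, α ∈ S.en q → ∀ β, ¬ S.StarComm st α β → β ∈ B)

/-- `B` is ⋆-stubborn at `q` (additionally condition D0). -/
def CTS.Stubborn (S : CTS X A P) (st : StarMode) (q : X) (B : Set A) : Prop :=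
  S.SemiStubborn st q B ∧ ((S.en q).Nonempty → (B ∩ S.en q).Nonempty)

/-- Process `i` is dynamically left-moving at `q`. -/
def CTS.lmv (S : CTS X A P) (i : P) (q : X) : Prop :=
  ∃ B : Set A, S.SemiStubborn .left q B ∧ B ∩ S.en q = {a | S.proc a = i} ∩ S.en q

/-- The transition `(q,α,q')` of process `i` is dynamically right-moving. -/
def CTS.rmv (S : CTS X A P) (i : P) (q : X) (α : A) (q' : X) : Prop :=
  ∃ B : Set A, S.SemiStubborn .right q B ∧ α ∈ B ∧
    B ∩ S.en q' ⊆ {a | S.proc a = i} ∧ B ∩ S.en q = {α}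

/-- The set `A⊖` of actions that can disable `Y`. -/
def Aminus (S : CTS X A P) (Y : Set X) : Set A :=
  {α | ∃ q ∈ Y, ∃ q', q' ∉ Y ∧ S.T q α q'}

/-- The set `A⊕` of actions that can enable `Y`. -/
def Aplus (S : CTS X A P) (Y : Set X) : Set A :=
  {α | ∃ q, q ∉ Y ∧ ∃ q' ∈ Y, S.T q α q'}

/-- Phase vectors `H = {N,R,L}^P`. -/
abbrev HVec (P : Type) := P → Phase

/-- The initial phase vector (all external). -/
def h0 (P : Type) : HVec P := fun _ => Phase.N

/-- The transition relation `T'_i` of the transaction system. -/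
def TStep (S : CTS X A P) (Y : Set X) (i : P) :
    X × HVec P → A → X × HVec P → Prop :=
  fun s α s' =>
    S.T s.1 α s'.1 ∧ S.proc α = i ∧ (∀ j, j ≠ i → s'.2 j = s.2 j) ∧
    (s'.2 i = Phase.R ↔ (s.2 i ≠ Phase.L ∧ S.rmv i s.1 α s'.1 ∧ α ∉ Aminus S Y)) ∧
    (s'.2 i = Phase.L → (S.lmv i s'.1 ∧ S.en s'.1 ∩ {a | S.proc a = i} ∩ Aplus S Y = ∅))

/-- The transaction system CTS' of a CTS. -/
def TSys (S : CTS X A P) (Y : Set X) : CTS (X × HVec P) A P where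
  T := fun s α s' => TStep S Y (S.proc α) s α s'
  proc := S.proc
  q0 := (S.q0, h0 P)

/-- States whose `i`-phase is external. -/
def Npart (i : P) : Set (X × HVec P) := {s | s.2 i = Phase.N}

/-- States whose `i`-phase is the pre-phase. -/
def Rpart (i : P) : Set (X × HVec P) := {s | s.2 i = Phase.R}

/-- States whose `i`-phase is the post-phase. -/
def Lpart (i : P) : Set (X × HVec P) := {s | s.2 i = Phase.L}

/-- Generic `↪_i = (⋂_{j≠i} N_j) ◁ →_i`. -/
def hookG {S : Type _} (stepOf : P → S → S → Prop) (Np : P → Set S) (i : P) : S → S → Prop :=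
  fun q q' => (∀ j, j ≠ i → q ∈ Np j) ∧ stepOf i q q'

/-- Generic `⇒_i = N_i ◁ ((↪_i ▷ co-N_i)^* ∘ (↪_i ▷ N_i))`. -/
def rstepG {S : Type _} (stepOf : P → S → S → Prop) (Np : P → Set S) (i : P) : S → S → Prop :=
  fun q q'' => q ∈ Np i ∧
    RComp (Relation.ReflTransGen (fun a b => hookG stepOf Np i a b ∧ b ∉ Np i))
          (fun a b => hookG stepOf Np i a b ∧ b ∈ Np i) q q''

/-- `↪_i` for the transaction system. -/
def hook (S : CTS X A P) (Y : Set X) (i : P) : X × HVec P → X × HVec P → Prop :=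
  hookG (TSys S Y).stepOf (fun j => Npart j) i

/-- `⇒_i` for the transaction system. -/
def rstep (S : CTS X A P) (Y : Set X) (i : P) : X × HVec P → X × HVec P → Prop :=
  rstepG (TSys S Y).stepOf (fun j => Npart j) i

/-- Reachability in the reduced transaction system (RTS). -/
def ReachRTS (S : CTS X A P) (Y : Set X) (s : X × HVec P) : Prop :=
  Relation.ReflTransGen (fun a b => ∃ i, rstep S Y i a b) (S.q0, h0 P) s

/-- Thread bisimulation: an equivalence relation that transfers `→_i`-steps. -/
def CTS.ThreadBisim (S : CTS X A P) (R : X → X → Prop) : Prop :=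
  Equivalence R ∧
  ∀ (i : P) (q q' q1 : X), R q q' → S.stepOf i q q1 → ∃ q1', S.stepOf i q' q1' ∧ R q1 q1'

/-- The phase-forgetting relation `≅_i` on transaction-system states. -/
def phEq (i : P) : (X × HVec P) → (X × HVec P) → Prop :=
  fun s s' => s.1 = s'.1 ∧ ∀ j, j ≠ i → s.2 j = s'.2 j

/-- `≅_Z`: transitive closure of the union of the `≅_i` for `i ∈ Z`. -/
def phEqZ (Z : Set P) : (X × HVec P) → (X × HVec P) → Prop :=
  Relation.TransGen (fun a b => ∃ k ∈ Z, phEq k a b)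

/-- Right restriction `r ▷ W`. -/
def restR {S : Type _} (r : S → S → Prop) (W : Set S) : S → S → Prop :=
  fun x y => r x y ∧ y ∈ W

/-- Left restriction `W ◁ r`. -/
def restL {S : Type _} (W : Set S) (r : S → S → Prop) : S → S → Prop :=
  fun x y => x ∈ W ∧ r x y

/-- `r` right-commutes with `s` up to `e`:  `r ∘ s ∘ e ⊆ s ∘ r ∘ e`. -/
def RightCommUpTo {S : Type _} (r s e : S → S → Prop) : Prop :=
  ∀ x z, RComp r (RComp s e) x z → RComp s (RComp r e) x z

/-- `r` left-commutes with `s` up to `e`:  `r ∘ s ∘ e ⊇ s ∘ r ∘ e`. -/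
def LeftCommUpTo {S : Type _} (r s e : S → S → Prop) : Prop :=
  ∀ x z, RComp s (RComp r e) x z → RComp r (RComp s e) x z

/-- Dropping the phases of a transaction-system run yields a run of the original system. -/
lemma reach_of_tsys_reach (S : CTS X A P) (Y : Set X) {s : X × HVec P}
    (hs : (TSys S Y).Reach s) : S.Reach s.1 := by
  induction hs with
  | refl => exact Relation.ReflTransGen.refl
  | tail _ hbc ih =>
    obtain ⟨α, h⟩ := hbc
    exact ih.tail ⟨α, h.1⟩

/-- Every run of the original system lifts to the transaction system: the moving process enters
phase `R` exactly when the rule for `R` forces it, and phase `N` otherwise. -/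
lemma exists_tsys_reach (S : CTS X A P) (Y : Set X) {q : X} (hq : S.Reach q) :
    ∃ h : HVec P, (TSys S Y).Reach (q, h) := by
  classical
  induction hq with
  | refl => exact ⟨h0 P, Relation.ReflTransGen.refl⟩
  | @tail b c _ hbc ih =>
    obtain ⟨h, hr⟩ := ih
    obtain ⟨α, hα⟩ := hbc
    refine ⟨Function.update h (S.proc α)
      (if h (S.proc α) ≠ Phase.L ∧ S.rmv (S.proc α) b α c ∧ α ∉ Aminus S Y
        then Phase.R else Phase.N), hr.tail ⟨α, hα, rfl, ?_, ?_, ?_⟩⟩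
    · intro j hj
      simp [Function.update_of_ne hj]
    · simp only [Function.update_self]
      split_ifs with hc
      · exact ⟨fun _ => hc, fun _ => rfl⟩
      · exact ⟨fun h => (nomatch h), fun h => (hc h).elim⟩
    · simp only [Function.update_self]
      split_ifs <;> intro h <;> cases h

/-- the transaction system preserves invariants. -/
theorem tsys_preserves_invariants {X A P : Type} [Finite A] [Finite P]
    (S : CTS X A P) (Y : Set X) :
    (∀ q, S.Reach q → q ∈ Y) ↔ (∀ (q : X) (h : HVec P), (TSys S Y).Reach (q, h) → q ∈ Y) := by
  constructor
  · intro hY q h hr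
    exact hY q (reach_of_tsys_reach S Y hr)
  · intro hY q hq
    obtain ⟨h, hr⟩ := exists_tsys_reach S Y hq
    exact hY q h hr

end TRF
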